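/- arXiv:2403.05740 — 5 statements merged into one kernel-verified Lean document; each statement's English description precedes it below -/
import Mathlib

section
/- Let n be a natural number and let P, Q : ℝ → Matrix (Fin n) (Fin n) ℝ and λ : Fin n → ℝ → ℝ be functions such that for every ρ, Q(ρ) is orthogonal (Q(ρ)ᵀ·Q(ρ) = Iₙ) and Q(ρ)⁻¹·P(ρ)·Q(ρ) is the diagonal matrix with diagonal entries λ₁(ρ), …, λₙ(ρ). Suppose P, Q have derivatives P'(ρ₀), Q'(ρ₀) at a point ρ₀ and each λ_l is differentiable at ρ₀. Then for each index l, the (l,l) diagonal entry of the matrix Q(ρ₀)⁻¹·P(ρ₀)·Q(ρ₀) + ρ₀·Q(ρ₀)⁻¹·P'(ρ₀)·Q(ρ₀) equals λ_l(ρ₀) + ρ₀·λ_l'(ρ₀), i.e., equals the derivative of ρ ↦ ρ·λ_l(ρ) at ρ₀. -/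
open Matrix

/-! If `w` is a fixed left eigenvector of `A x` and `v t` are right eigenvectors of `A t`, then
`(μ t - μ x) (w ⬝ᵥ v t) = w ⬝ᵥ (A t - A x) *ᵥ v t`. Dividing by `t - x` and letting `t → x`
differentiates the eigenvalue `μ` with only continuity of `v`. For `A = P`, the relevant vectors
are row `l` of `(Q ρ₀)⁻¹` and column `l` of `Q ρ`. -/

open Filter Topology

section Eigenvalue

variable {ι : Type*} [Fintype ι]

theorem sub_mul_dotProduct_eq_dotProduct_sub_mulVec {R : Type*} [CommRing R]
    {A B : Matrix ι ι R} {α β : R} {v w : ι → R}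
    (hv : A *ᵥ v = α • v) (hw : w ᵥ* B = β • w) :
    (α - β) * (w ⬝ᵥ v) = w ⬝ᵥ (A - B) *ᵥ v := by
  rw [sub_mulVec, dotProduct_sub, hv, dotProduct_mulVec w B, hw, dotProduct_smul, smul_dotProduct,
    smul_eq_mul, smul_eq_mul, sub_mul]

theorem tendsto_dotProduct_mulVec {κ R X : Type*} [Fintype κ] [NonUnitalNonAssocSemiring R]
    [TopologicalSpace R] [ContinuousAdd R] [ContinuousMul R] {F : Filter X}
    {B : X → Matrix κ ι R} {B₀ : Matrix κ ι R} {v : X → ι → R} {v₀ : ι → R} (w : κ → R)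
    (hB : Tendsto B F (𝓝 B₀)) (hv : Tendsto v F (𝓝 v₀)) :
    Tendsto (fun t => w ⬝ᵥ B t *ᵥ v t) F (𝓝 (w ⬝ᵥ B₀ *ᵥ v₀)) :=
  tendsto_finsetSum _ fun i _ => .const_mul _ <| tendsto_finsetSum _ fun j _ =>
    (tendsto_pi_nhds.1 (tendsto_pi_nhds.1 hB i) j).mul (tendsto_pi_nhds.1 hv j)

variable {𝕜 : Type*} [NontriviallyNormedField 𝕜]

theorem hasDerivAt_eigenvalue {A : 𝕜 → Matrix ι ι 𝕜} {A' : Matrix ι ι 𝕜} {μ : 𝕜 → 𝕜}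
    {v : 𝕜 → ι → 𝕜} {w : ι → 𝕜} {x : 𝕜}
    (hA : ∀ i j, HasDerivAt (fun t => A t i j) (A' i j) x) (hv : ContinuousAt v x)
    (hright : ∀ᶠ t in 𝓝 x, A t *ᵥ v t = μ t • v t) (hleft : w ᵥ* A x = μ x • w)
    (hwv : w ⬝ᵥ v x ≠ 0) :
    HasDerivAt μ ((w ⬝ᵥ A' *ᵥ v x) / (w ⬝ᵥ v x)) x := by
  have hv' : Tendsto v (𝓝[≠] x) (𝓝 (v x)) := hv.tendsto.mono_left nhdsWithin_le_nhds
  have hslope : Tendsto (fun t => (t - x)⁻¹ • (A t - A x)) (𝓝[≠] x) (𝓝 A') :=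
    tendsto_pi_nhds.2 fun i => tendsto_pi_nhds.2 fun j => (hA i j).tendsto_slope
  have hdot : Tendsto (fun t => w ⬝ᵥ v t) (𝓝[≠] x) (𝓝 (w ⬝ᵥ v x)) :=
    ((continuous_const.dotProduct continuous_id).tendsto (v x)).comp hv'
  refine hasDerivAt_iff_tendsto_slope.2
    (((tendsto_dotProduct_mulVec w hslope hv').div hdot hwv).congr' ?_)
  filter_upwards [hright.filter_mono nhdsWithin_le_nhds, hdot.eventually_ne hwv] with t ht hne
  rw [Pi.div_apply, div_eq_iff hne, slope_def_module, smul_mulVec, dotProduct_smul,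
    ← sub_mul_dotProduct_eq_dotProduct_sub_mulVec ht hleft, smul_eq_mul, smul_eq_mul, mul_assoc]

end Eigenvalue

section Diagonalization

variable {ι : Type*} [Fintype ι] [DecidableEq ι]

theorem mulVec_col_of_inv_mul_mul_eq_diagonal {R : Type*} [CommRing R] {P Q : Matrix ι ι R}
    {d : ι → R} (hQ : IsUnit Q) (h : Q⁻¹ * P * Q = diagonal d) (l : ι) :
    P *ᵥ Q.col l = d l • Q.col l := by
  have hPQ : P * Q = Q * diagonal d := by
    rw [← h, Matrix.mul_assoc, mul_nonsing_inv_cancel_left _ _ ((isUnit_iff_isUnit_det Q).1 hQ)]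
  ext i
  exact (congr_fun₂ hPQ i l).trans ((mul_diagonal ..).trans (mul_comm ..))

theorem row_inv_vecMul_of_inv_mul_mul_eq_diagonal {R : Type*} [CommRing R] {P Q : Matrix ι ι R}
    {d : ι → R} (hQ : IsUnit Q) (h : Q⁻¹ * P * Q = diagonal d) (l : ι) :
    Q⁻¹.row l ᵥ* P = d l • Q⁻¹.row l := by
  have hQP : Q⁻¹ * P = diagonal d * Q⁻¹ := by
    rw [← h, mul_nonsing_inv_cancel_right _ _ ((isUnit_iff_isUnit_det Q).1 hQ)]
  ext j
  simpa [mul_apply_eq_vecMul, row] using congr_fun₂ hQP l j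

variable {𝕜 : Type*} [NontriviallyNormedField 𝕜] {P Q : 𝕜 → Matrix ι ι 𝕜} {P' : Matrix ι ι 𝕜}
  {lam : ι → 𝕜 → 𝕜} {ρ₀ : 𝕜}

theorem hasDerivAt_of_inv_mul_mul_eq_diagonal (hQ : IsUnit (Q ρ₀)) (hQcont : ContinuousAt Q ρ₀)
    (hdiag : ∀ᶠ ρ in 𝓝 ρ₀, (Q ρ)⁻¹ * P ρ * Q ρ = diagonal fun l => lam l ρ)
    (hP' : ∀ i j, HasDerivAt (fun ρ => P ρ i j) (P' i j) ρ₀) (l : ι) :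
    HasDerivAt (lam l) (((Q ρ₀)⁻¹ * P' * Q ρ₀) l l) ρ₀ := by
  have hcol : ContinuousAt (fun ρ => (Q ρ).col l) ρ₀ :=
    continuousAt_pi.2 fun i => continuousAt_pi.1 (continuousAt_pi.1 hQcont i) l
  have hunit : ∀ᶠ ρ in 𝓝 ρ₀, IsUnit (Q ρ) := by
    simp only [isUnit_iff_isUnit_det, isUnit_iff_ne_zero] at hQ ⊢
    exact ((continuous_id.matrix_det.tendsto _).comp hQcont).eventually_ne hQ
  have hright : ∀ᶠ ρ in 𝓝 ρ₀, P ρ *ᵥ (Q ρ).col l = lam l ρ • (Q ρ).col l := by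
    filter_upwards [hunit, hdiag] with ρ hρ hdρ
    exact mulVec_col_of_inv_mul_mul_eq_diagonal hρ hdρ l
  have hleft := row_inv_vecMul_of_inv_mul_mul_eq_diagonal hQ hdiag.self_of_nhds l
  have hnormalized : (Q ρ₀)⁻¹.row l ⬝ᵥ (Q ρ₀).col l = 1 := by
    change ((Q ρ₀)⁻¹ * Q ρ₀) l l = 1
    rw [nonsing_inv_mul _ ((isUnit_iff_isUnit_det _).1 hQ), one_apply_eq]
  have hderiv := hasDerivAt_eigenvalue hP' hcol hright hleft (by simp [hnormalized])
  rwa [hnormalized, div_one, row, col, ← mul_mul_apply] at hderiv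

theorem diag_entry_eq_deriv_rho_lambda_general (hQ : IsUnit (Q ρ₀)) (hQcont : ContinuousAt Q ρ₀)
    (hdiag : ∀ᶠ ρ in 𝓝 ρ₀, (Q ρ)⁻¹ * P ρ * Q ρ = diagonal fun l => lam l ρ)
    (hP' : ∀ i j, HasDerivAt (fun ρ => P ρ i j) (P' i j) ρ₀) (l : ι) :
    HasDerivAt (fun ρ => ρ * lam l ρ)
      (((Q ρ₀)⁻¹ * P ρ₀ * Q ρ₀ + ρ₀ • ((Q ρ₀)⁻¹ * P' * Q ρ₀)) l l) ρ₀ := by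
  simpa [hdiag.self_of_nhds] using
    (hasDerivAt_id ρ₀).fun_mul (hasDerivAt_of_inv_mul_mul_eq_diagonal hQ hQcont hdiag hP' l)

end Diagonalization

/-- **Lemma 3.** If `Q ρ` is orthogonal and diagonalizes `P ρ` with eigenvalue
functions `lam l`, then the `(l,l)` entry of
`Q(ρ₀)⁻¹ P(ρ₀) Q(ρ₀) + ρ₀ • Q(ρ₀)⁻¹ P'(ρ₀) Q(ρ₀)` equals
`lam l ρ₀ + ρ₀ · (lam l)'(ρ₀)`, the derivative of `ρ ↦ ρ · lam l ρ` at `ρ₀`.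
Derivatives of matrix-valued functions are taken entrywise. -/
theorem diag_entry_eq_deriv_rho_lambda (n : ℕ)
    (P Q : ℝ → Matrix (Fin n) (Fin n) ℝ) (lam : Fin n → ℝ → ℝ)
    (hQorth : ∀ ρ, (Q ρ)ᵀ * Q ρ = 1)
    (hdiag : ∀ ρ, (Q ρ)⁻¹ * P ρ * Q ρ = Matrix.diagonal (fun l => lam l ρ))
    (ρ₀ : ℝ) (P' Q' : Matrix (Fin n) (Fin n) ℝ)
    (hP' : ∀ i j, HasDerivAt (fun ρ => P ρ i j) (P' i j) ρ₀)
    (hQ' : ∀ i j, HasDerivAt (fun ρ => Q ρ i j) (Q' i j) ρ₀)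
    (lam' : Fin n → ℝ)
    (hlam' : ∀ l, HasDerivAt (lam l) (lam' l) ρ₀) :
    ∀ l : Fin n,
      ((Q ρ₀)⁻¹ * P ρ₀ * Q ρ₀ + ρ₀ • ((Q ρ₀)⁻¹ * P' * Q ρ₀)) l l
        = lam l ρ₀ + ρ₀ * lam' l ∧
      HasDerivAt (fun ρ => ρ * lam l ρ) (lam l ρ₀ + ρ₀ * lam' l) ρ₀ := by
  intro l
  have hmul : HasDerivAt (fun ρ => ρ * lam l ρ) (lam l ρ₀ + ρ₀ * lam' l) ρ₀ := by
    simpa using (hasDerivAt_id ρ₀).fun_mul (hlam' l)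
  have hQcont : ContinuousAt Q ρ₀ :=
    continuousAt_pi.2 fun i => continuousAt_pi.2 fun j => (hQ' i j).continuousAt
  exact ⟨(diag_entry_eq_deriv_rho_lambda_general (.of_mul_eq_one_right _ (hQorth ρ₀)) hQcont
    (.of_forall hdiag) hP' l).unique hmul, hmul⟩
end

section
/- Let n ≥ 1, let ρ > 0, let P be an n×n real symmetric matrix, and let Q be an n×n orthogonal matrix such that QᵀPQ is the diagonal matrix Γ with diagonal entries λ₁, …, λₙ satisfying 0 < λ_l < 1/ρ for every l. Let B be an n×n real matrix such that every diagonal entry of QᵀBQ is strictly positive. Then Iₙ − ρP is invertible and tr((Iₙ − ρP)⁻¹ · B) > tr(B). -/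
open Matrix

section Conjugation

variable {ι R : Type*} [Fintype ι] [DecidableEq ι] [CommRing R] {Q : Matrix ι ι R}

theorem isUnit_conj'_iff (hQ : IsUnit Q) (A : Matrix ι ι R) :
    IsUnit (Q⁻¹ * A * Q) ↔ IsUnit A := by
  obtain ⟨U, rfl⟩ := hQ
  rw [← coe_units_inv, Units.isUnit_mul_units, Units.isUnit_units_mul]

theorem conj'_mul (hQ : IsUnit Q) (A B : Matrix ι ι R) :
    Q⁻¹ * (A * B) * Q = (Q⁻¹ * A * Q) * (Q⁻¹ * B * Q) := by
  have hQ_det : IsUnit Q.det := (isUnit_iff_isUnit_det Q).mp hQ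
  simp only [mul_assoc, mul_nonsing_inv_cancel_left _ _ hQ_det]

theorem conj'_inv (hQ : IsUnit Q) (A : Matrix ι ι R) :
    Q⁻¹ * A⁻¹ * Q = (Q⁻¹ * A * Q)⁻¹ := by
  have hQ_det : IsUnit Q.det := (isUnit_iff_isUnit_det Q).mp hQ
  rw [Matrix.mul_inv_rev, Matrix.mul_inv_rev, nonsing_inv_nonsing_inv Q hQ_det, mul_assoc]

theorem conj'_one_sub_smul_eq_diagonal (hQ : IsUnit Q) {A : Matrix ι ι R} {d : ι → R}
    (hA : Q⁻¹ * A * Q = diagonal d) (r : R) :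
    Q⁻¹ * (1 - r • A) * Q = diagonal fun i => 1 - r * d i := by
  have hQ_det : IsUnit Q.det := (isUnit_iff_isUnit_det Q).mp hQ
  calc Q⁻¹ * (1 - r • A) * Q = 1 - r • (Q⁻¹ * A * Q) := by
        simp only [mul_sub, sub_mul, mul_one, nonsing_inv_mul Q hQ_det, mul_smul_comm,
          smul_mul_assoc]
    _ = diagonal fun i => 1 - r * d i := by
        rw [hA, ← diagonal_smul, ← diagonal_one, diagonal_sub]
        rfl

end Conjugation

section Diagonalizable

variable {ι K : Type*} [Fintype ι] [DecidableEq ι] [Field K] {Q A : Matrix ι ι K} {d : ι → K}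

theorem isUnit_of_conj'_eq_diagonal (hQ : IsUnit Q) (hA : Q⁻¹ * A * Q = diagonal d)
    (hd : ∀ i, d i ≠ 0) : IsUnit A := by
  rw [← isUnit_conj'_iff hQ, hA, isUnit_diagonal, Pi.isUnit_iff]
  exact fun i => (hd i).isUnit

theorem conj'_inv_eq_diagonal (hQ : IsUnit Q) (hA : Q⁻¹ * A * Q = diagonal d)
    (hd : ∀ i, d i ≠ 0) : Q⁻¹ * A⁻¹ * Q = diagonal d⁻¹ := by
  rw [conj'_inv hQ, hA]
  refine inv_eq_right_inv ?_
  rw [diagonal_mul_diagonal, ← diagonal_one]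
  exact congrArg diagonal (funext fun i => mul_inv_cancel₀ (hd i))

end Diagonalizable

theorem trace_lt_trace_diagonal_mul {ι R : Type*} [Fintype ι] [DecidableEq ι]
    [Semiring R] [PartialOrder R] [IsStrictOrderedRing R] {d : ι → R} {C : Matrix ι ι R}
    (hd : ∀ i, 1 ≤ d i) (hC : ∀ i, 0 ≤ C i i) (hpos : ∃ i, 1 < d i ∧ 0 < C i i) :
    C.trace < (diagonal d * C).trace := by
  obtain ⟨i, hdi, hCi⟩ := hpos
  simp only [trace, diag_apply, diagonal_mul]
  exact Finset.sum_lt_sum (fun j _ => le_mul_of_one_le_left (hC j) (hd j))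
    ⟨i, Finset.mem_univ i, lt_mul_of_one_lt_left hCi hdi⟩

section OrderedField

variable {ι K : Type*} [Fintype ι] [DecidableEq ι]
  [Field K] [LinearOrder K] [IsStrictOrderedRing K]

theorem trace_lt_trace_inv_mul {Q A B : Matrix ι ι K} {d : ι → K} (hQ : IsUnit Q)
    (hA : Q⁻¹ * A * Q = diagonal d) (hd : ∀ i, 0 < d i ∧ d i ≤ 1)
    (hB : ∀ i, 0 ≤ (Q⁻¹ * B * Q) i i) (hpos : ∃ i, d i < 1 ∧ 0 < (Q⁻¹ * B * Q) i i) :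
    B.trace < (A⁻¹ * B).trace := by
  obtain ⟨i, hdi, hBi⟩ := hpos
  calc B.trace = (Q⁻¹ * B * Q).trace := (trace_conj' hQ B).symm
    _ < (diagonal d⁻¹ * (Q⁻¹ * B * Q)).trace :=
        trace_lt_trace_diagonal_mul (fun j => (one_le_inv₀ (hd j).1).mpr (hd j).2) hB
          ⟨i, (one_lt_inv₀ (hd i).1).mpr hdi, hBi⟩
    _ = (Q⁻¹ * (A⁻¹ * B) * Q).trace := by
        rw [conj'_mul hQ, conj'_inv_eq_diagonal hQ hA fun j => (hd j).1.ne']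
    _ = (A⁻¹ * B).trace := trace_conj' hQ (A⁻¹ * B)

theorem trace_inv_one_sub_smul_mul_gt_general {ρ : K} {P Q B : Matrix ι ι K} {lam : ι → K}
    (hQ : IsUnit Q) (hdiag : Q⁻¹ * P * Q = diagonal lam)
    (hlam : ∀ l, 0 ≤ ρ * lam l ∧ ρ * lam l < 1) (hB : ∀ l, 0 ≤ (Q⁻¹ * B * Q) l l)
    (hpos : ∃ l, 0 < ρ * lam l ∧ 0 < (Q⁻¹ * B * Q) l l) :
    IsUnit (1 - ρ • P) ∧ B.trace < ((1 - ρ • P)⁻¹ * B).trace := by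
  have hdiag_sub := conj'_one_sub_smul_eq_diagonal hQ hdiag ρ
  have hd_pos : ∀ l, 0 < 1 - ρ * lam l := fun l => sub_pos.mpr (hlam l).2
  obtain ⟨l, hlam_l, hB_l⟩ := hpos
  exact ⟨isUnit_of_conj'_eq_diagonal hQ hdiag_sub fun l => (hd_pos l).ne',
    trace_lt_trace_inv_mul hQ hdiag_sub (fun l => ⟨hd_pos l, sub_le_self 1 (hlam l).1⟩) hB
      ⟨l, sub_lt_self 1 hlam_l, hB_l⟩⟩

end OrderedField

/-- Key inequality in the proof of **Lemma 4**: if `P` is symmetric, orthogonally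
diagonalized by `Q` with eigenvalues `0 < λ_l < 1/ρ`, and every diagonal entry of
`Qᵀ B Q` is positive, then `I − ρP` is invertible and
`tr((I − ρP)⁻¹ B) > tr B`. -/
theorem trace_inv_one_sub_smul_mul_gt (n : ℕ) (hn : 1 ≤ n) (ρ : ℝ) (hρ : 0 < ρ)
    (P Q B : Matrix (Fin n) (Fin n) ℝ) (hP : P.IsSymm)
    (hQ : Qᵀ * Q = 1) (lam : Fin n → ℝ)
    (hdiag : Qᵀ * P * Q = Matrix.diagonal lam)
    (hlam : ∀ l, 0 < lam l ∧ lam l < 1 / ρ)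
    (hB : ∀ l, 0 < (Qᵀ * B * Q) l l) :
    IsUnit (1 - ρ • P) ∧ B.trace < ((1 - ρ • P)⁻¹ * B).trace := by
  have hlam_pos : ∀ l, 0 < ρ * lam l := fun l => mul_pos hρ (hlam l).1
  rw [← inv_eq_left_inv hQ] at hdiag hB
  exact trace_inv_one_sub_smul_mul_gt_general (.of_mul_eq_one_right _ hQ) hdiag
    (fun l => ⟨(hlam_pos l).le, (lt_div_iff₀' hρ).mp (hlam l).2⟩) (fun l => (hB l).le)
    ⟨⟨0, hn⟩, hlam_pos _, hB _⟩
end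

section
/- Let σ₁², σ₂², σ₁₂ be real numbers and let Σ_x be the 2×2 real symmetric matrix [[σ₁², σ₁₂],[σ₁₂, σ₂²]]; assume Σ_x is positive semidefinite and let ρ ≥ 0. Set Δ_x := σ₁²σ₂² − σ₁₂² and Δ_r := 1 + ρ(σ₁² + σ₂² + ρΔ_x). Then I₂ + ρΣ_x is invertible, Δ_r = det(I₂ + ρΣ_x) > 0, and Σ_c := Σ_x − ρ·Σ_x·(I₂ + ρΣ_x)⁻¹·Σ_x equals (1/Δ_r)·[[σ₁² + ρΔ_x, σ₁₂],[σ₁₂, σ₂² + ρΔ_x]]. -/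
open Matrix

/-! Writing `A = Σ_x`, the filter formula collapses to `A (I + ρA)⁻¹`. In dimension two the adjugate
is additive, so `A · adj(I + ρA) = A + ρ A · adj A = A + ρ (det A) I`; dividing by
`det(I + ρA) = 1 + ρ (tr A + ρ det A)`, which is positive because `I + ρA` is positive definite,
gives the closed form. -/

theorem sub_mul_inv_one_add_mul {m n R : Type*} [Fintype n] [DecidableEq n] [CommRing R]
    (B : Matrix m n R) {C : Matrix n n R} (hC : IsUnit (1 + C)) :
    B - B * (1 + C)⁻¹ * C = B * (1 + C)⁻¹ := by
  have hinv : (1 + C)⁻¹ * (1 + C) = 1 :=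
    nonsing_inv_mul _ ((isUnit_iff_isUnit_det _).mp hC)
  rw [sub_eq_iff_eq_add]
  calc B = B * ((1 + C)⁻¹ * (1 + C)) := by rw [hinv, Matrix.mul_one]
    _ = B * (1 + C)⁻¹ + B * (1 + C)⁻¹ * C := by
      rw [← Matrix.mul_assoc, Matrix.mul_add, Matrix.mul_one]

section FinTwo

variable {R : Type*} [CommRing R]

theorem adjugate_fin_two_add (A B : Matrix (Fin 2) (Fin 2) R) :
    (A + B).adjugate = A.adjugate + B.adjugate := by
  ext i j
  fin_cases i <;> fin_cases j <;> simp [adjugate_fin_two, add_comm]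

theorem det_one_add_smul_fin_two (ρ : R) (A : Matrix (Fin 2) (Fin 2) R) :
    (1 + ρ • A).det = 1 + ρ * (A.trace + ρ * A.det) := by
  simp only [det_fin_two, trace_fin_two, Matrix.add_apply, Matrix.smul_apply, smul_eq_mul,
    one_apply_eq, one_apply_ne zero_ne_one, one_apply_ne one_ne_zero]
  ring

theorem mul_adjugate_one_add_smul_fin_two (ρ : R) (A : Matrix (Fin 2) (Fin 2) R) :
    A * (1 + ρ • A).adjugate = A + (ρ * A.det) • 1 := by
  calc A * (1 + ρ • A).adjugate = A * (1 + ρ • A.adjugate) := by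
        simp [adjugate_fin_two_add, adjugate_smul]
    _ = A + (ρ * A.det) • 1 := by
        rw [Matrix.mul_add, Matrix.mul_one, Matrix.mul_smul, mul_adjugate, smul_smul]

theorem mul_inv_one_add_smul_fin_two (ρ : R) (A : Matrix (Fin 2) (Fin 2) R) :
    A * (1 + ρ • A)⁻¹ = Ring.inverse (1 + ρ • A).det • (A + (ρ * A.det) • 1) := by
  rw [inv_def, Matrix.mul_smul, mul_adjugate_one_add_smul_fin_two]

end FinTwo

section PosSemidef

open scoped ComplexOrder

variable {𝕜 : Type*} [RCLike 𝕜]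

theorem posDef_one_add_smul {n : Type*} [Finite n] [DecidableEq n] {A : Matrix n n 𝕜}
    (hA : A.PosSemidef) {ρ : 𝕜} (hρ : 0 ≤ ρ) : (1 + ρ • A).PosDef :=
  PosDef.one.add_posSemidef (hA.smul hρ)

theorem sigma_c_formula_general {A : Matrix (Fin 2) (Fin 2) 𝕜} (hA : A.PosSemidef)
    {ρ : 𝕜} (hρ : 0 ≤ ρ) :
    IsUnit (1 + ρ • A) ∧
    (1 + ρ • A).det = 1 + ρ * (A.trace + ρ * A.det) ∧
    0 < 1 + ρ * (A.trace + ρ * A.det) ∧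
    A - ρ • (A * (1 + ρ • A)⁻¹ * A)
      = (1 + ρ * (A.trace + ρ * A.det))⁻¹ • (A + (ρ * A.det) • 1) := by
  have hpos : (1 + ρ • A).PosDef := posDef_one_add_smul hA hρ
  have hdet := det_one_add_smul_fin_two ρ A
  refine ⟨hpos.isUnit, hdet, hdet ▸ hpos.det_pos, ?_⟩
  calc A - ρ • (A * (1 + ρ • A)⁻¹ * A) = A * (1 + ρ • A)⁻¹ := by
        rw [← Matrix.mul_smul, sub_mul_inv_one_add_mul A hpos.isUnit]
    _ = (1 + ρ * (A.trace + ρ * A.det))⁻¹ • (A + (ρ * A.det) • 1) := by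
        rw [mul_inv_one_add_smul_fin_two, hdet, Ring.inverse_eq_inv']

end PosSemidef

/-- **Proposition 13.** For the 2×2 positive semidefinite matrix
`Σ_x = [[σ₁², σ₁₂],[σ₁₂, σ₂²]]` and `ρ ≥ 0`, with `Δ_x = σ₁²σ₂² − σ₁₂²` and
`Δ_r = 1 + ρ(σ₁² + σ₂² + ρΔ_x)`, the matrix `I₂ + ρΣ_x` is invertible with
determinant `Δ_r > 0`, and
`Σ_c = Σ_x − ρΣ_x(I₂+ρΣ_x)⁻¹Σ_x = (1/Δ_r)[[σ₁²+ρΔ_x, σ₁₂],[σ₁₂, σ₂²+ρΔ_x]]`. -/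
theorem sigma_c_formula (σ1 σ2 σ12 : ℝ) (ρ : ℝ) (hρ : 0 ≤ ρ)
    (Sx : Matrix (Fin 2) (Fin 2) ℝ) (hSx : Sx = !![σ1, σ12; σ12, σ2])
    (hpsd : Sx.PosSemidef)
    (Dx Dr : ℝ) (hDx : Dx = σ1 * σ2 - σ12 ^ 2)
    (hDr : Dr = 1 + ρ * (σ1 + σ2 + ρ * Dx)) :
    IsUnit (1 + ρ • Sx) ∧
    (1 + ρ • Sx).det = Dr ∧ 0 < Dr ∧
    Sx - ρ • (Sx * (1 + ρ • Sx)⁻¹ * Sx)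
      = Dr⁻¹ • !![σ1 + ρ * Dx, σ12; σ12, σ2 + ρ * Dx] := by
  have htrace : Sx.trace = σ1 + σ2 := by rw [hSx, trace_fin_two_of]
  have hdet : Sx.det = Dx := by rw [hSx, hDx, det_fin_two_of, sq]
  have hmatrix : Sx + (ρ * Dx) • 1 = !![σ1 + ρ * Dx, σ12; σ12, σ2 + ρ * Dx] := by
    simp [hSx, one_fin_two]
  simpa only [htrace, hdet, ← hDr, hmatrix] using sigma_c_formula_general hpsd hρ
end

section
/- Let σ₁², σ₂², σ₁₂, ρ be real numbers with 0 ≤ σ₁² ≤ 1, 0 ≤ σ₂² ≤ 1, ρ ≥ 0, and set Δ_x := σ₁²σ₂² − σ₁₂²; assume Δ_x ≥ 0. Then ( (σ₁² + σ₂²)/2 + ρΔ_x ) / ( 1 + ρ(σ₁² + σ₂² + ρΔ_x) ) ≤ 1/(1 + ρ). -/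
/-!
The map `x ↦ x / (1 + ρ x)` sends each eigenvalue of `Σ_x` to the corresponding eigenvalue of
`Σ_c`. It is concave on `[0, ∞)`, so `½ tr(Σ_c)` is at most its value at `t = ½ tr(Σ_x)`, and it
is increasing, so for `t ≤ 1` that value is at most `1 / (1 + ρ)`. In terms of `t` and
`d = det Σ_x`, the concavity step amounts to `d ≤ t ^ 2`, the AM-GM inequality for the eigenvalues.
-/

section LinearOrderedField

variable {K : Type*} [Field K] [LinearOrder K] [IsStrictOrderedRing K]

lemma monotoneOn_div_one_add_mul {ρ : K} (hρ : 0 ≤ ρ) :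
    MonotoneOn (fun x : K ↦ x / (1 + ρ * x)) (Set.Ici 0) := by
  intro x hx y hy hxy
  rw [Set.mem_Ici] at hx hy
  have hx_pos : 0 < 1 + ρ * x := by positivity
  have hy_pos : 0 < 1 + ρ * y := by positivity
  refine (div_le_div_iff₀ hx_pos hy_pos).2 ?_
  linear_combination hxy

-- If `a`, `b` have mean `t` and product `d`, the left-hand side is the mean of `a / (1 + ρ a)`
-- and `b / (1 + ρ b)`.
lemma add_mul_div_le_div_one_add_mul {ρ t d : K} (hρ : 0 ≤ ρ) (ht : 0 ≤ t) (hd : 0 ≤ d)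
    (hdt : d ≤ t ^ 2) :
    (t + ρ * d) / (1 + ρ * (2 * t + ρ * d)) ≤ t / (1 + ρ * t) := by
  have h_left_pos : 0 < 1 + ρ * (2 * t + ρ * d) := by positivity
  have h_right_pos : 0 < 1 + ρ * t := by positivity
  rw [div_le_div_iff₀ h_left_pos h_right_pos, ← sub_nonneg]
  calc 0 ≤ ρ * (t ^ 2 - d) := mul_nonneg hρ (sub_nonneg.2 hdt)
    _ = t * (1 + ρ * (2 * t + ρ * d)) - (t + ρ * d) * (1 + ρ * t) := by ring

lemma mul_sub_sq_le_sq_half_add (a b c : K) : a * b - c ^ 2 ≤ ((a + b) / 2) ^ 2 := by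
  linear_combination sq_nonneg ((a - b) / 2) + sq_nonneg c

theorem half_trace_sigma_c_le_general {σ1 σ2 σ12 ρ Dx : K}
    (hσ : 0 ≤ σ1 + σ2) (hσ' : σ1 + σ2 ≤ 2) (hρ : 0 ≤ ρ)
    (hDx : Dx = σ1 * σ2 - σ12 ^ 2) (hDx0 : 0 ≤ Dx) :
    ((σ1 + σ2) / 2 + ρ * Dx) / (1 + ρ * (σ1 + σ2 + ρ * Dx)) ≤ 1 / (1 + ρ) := by
  set t := (σ1 + σ2) / 2 with ht
  have h_trace : σ1 + σ2 = 2 * t := by rw [ht]; ring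
  have ht0 : 0 ≤ t := by linarith
  have ht1 : t ≤ 1 := by linarith
  have h_amgm : Dx ≤ t ^ 2 := hDx.trans_le (mul_sub_sq_le_sq_half_add σ1 σ2 σ12)
  calc (t + ρ * Dx) / (1 + ρ * (σ1 + σ2 + ρ * Dx))
      = (t + ρ * Dx) / (1 + ρ * (2 * t + ρ * Dx)) := by rw [h_trace]
    _ ≤ t / (1 + ρ * t) := add_mul_div_le_div_one_add_mul hρ ht0 hDx0 h_amgm
    _ ≤ 1 / (1 + ρ * 1) := monotoneOn_div_one_add_mul hρ ht0 zero_le_one ht1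
    _ = 1 / (1 + ρ) := by rw [mul_one]

end LinearOrderedField

/-- Inequality `½ tr(Σ_c) ≤ 1/(1+ρ)` from Section V-E of the paper, by direct
computation: for `0 ≤ σ₁² ≤ 1`, `0 ≤ σ₂² ≤ 1`, `ρ ≥ 0` and
`Δ_x = σ₁²σ₂² − σ₁₂² ≥ 0`,
`((σ₁²+σ₂²)/2 + ρΔ_x) / (1 + ρ(σ₁²+σ₂²+ρΔ_x)) ≤ 1/(1+ρ)`. -/
theorem half_trace_sigma_c_le (σ1 σ2 σ12 ρ : ℝ)
    (hσ1 : 0 ≤ σ1) (hσ1' : σ1 ≤ 1) (hσ2 : 0 ≤ σ2) (hσ2' : σ2 ≤ 1)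
    (hρ : 0 ≤ ρ) (Dx : ℝ) (hDx : Dx = σ1 * σ2 - σ12 ^ 2) (hDx0 : 0 ≤ Dx) :
    ((σ1 + σ2) / 2 + ρ * Dx) / (1 + ρ * (σ1 + σ2 + ρ * Dx)) ≤ 1 / (1 + ρ) :=
  half_trace_sigma_c_le_general (add_nonneg hσ1 hσ2) (by linarith) hρ hDx hDx0
end

section
/- Let n be a natural number, let M be an n×n real symmetric matrix such that both M and Iₙ − M are positive semidefinite, and let ρ ≥ 0. Then Iₙ + ρM is invertible and tr((Iₙ + ρM)⁻¹ · M) ≤ n/(1 + ρ). -/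
open Matrix

open scoped ComplexOrder in
theorem trace_mul_nonneg_of_posSemidef {𝕜 ι : Type*} [RCLike 𝕜] [Fintype ι]
    {A B : Matrix ι ι 𝕜} (hA : A.PosSemidef) (hB : B.PosSemidef) :
    0 ≤ (A * B).trace := by
  classical
  open scoped MatrixOrder in
  obtain ⟨C, rfl⟩ := CStarAlgebra.nonneg_iff_eq_star_mul_self.mp hB.nonneg
  calc
    0 ≤ (C * A * Cᴴ).trace := (hA.mul_mul_conjTranspose_same C).trace_nonneg
    _ = (A * (star C * C)).trace := by
      rw [star_eq_conjTranspose, Matrix.mul_assoc, trace_mul_comm, Matrix.mul_assoc]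

theorem inv_one_add_smul_mul_one_sub {R ι : Type*} [CommRing R] [Fintype ι] [DecidableEq ι]
    {M : Matrix ι ι R} {ρ : R} (hA : IsUnit (1 + ρ • M)) :
    (1 + ρ • M)⁻¹ * (1 - M) = 1 - (1 + ρ) • ((1 + ρ • M)⁻¹ * M) := by
  have hsplit : 1 - M = (1 + ρ • M) - (1 + ρ) • M := by module
  rw [hsplit, Matrix.mul_sub, Matrix.mul_smul,
    nonsing_inv_mul _ ((isUnit_iff_isUnit_det _).mp hA)]

open scoped ComplexOrder in
theorem trace_filtering_error_le_general {𝕜 ι : Type*} [RCLike 𝕜] [Fintype ι] [DecidableEq ι]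
    {M : Matrix ι ι 𝕜} {ρ : 𝕜} (hA : (1 + ρ • M).PosDef) (hM1 : (1 - M).PosSemidef)
    (hρ : 0 < 1 + ρ) :
    ((1 + ρ • M)⁻¹ * M).trace ≤ Fintype.card ι / (1 + ρ) := by
  rw [le_div_iff₀' hρ, ← sub_nonneg]
  calc
    0 ≤ ((1 + ρ • M)⁻¹ * (1 - M)).trace :=
      trace_mul_nonneg_of_posSemidef hA.inv.posSemidef hM1
    _ = Fintype.card ι - (1 + ρ) * ((1 + ρ • M)⁻¹ * M).trace := by
      rw [inv_one_add_smul_mul_one_sub hA.isUnit, trace_sub, trace_one, trace_smul, smul_eq_mul]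

/-- Inequality (154) of the paper: if `0 ≤ M ≤ Iₙ` in the positive semidefinite
order and `ρ ≥ 0`, then `Iₙ + ρM` is invertible and
`tr((Iₙ + ρM)⁻¹ M) ≤ n/(1+ρ)`. -/
theorem trace_filtering_error_le (n : ℕ) (M : Matrix (Fin n) (Fin n) ℝ)
    (hM : M.PosSemidef) (hM1 : ((1 : Matrix (Fin n) (Fin n) ℝ) - M).PosSemidef)
    (ρ : ℝ) (hρ : 0 ≤ ρ) :
    IsUnit (1 + ρ • M) ∧ ((1 + ρ • M)⁻¹ * M).trace ≤ n / (1 + ρ) := by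
  have hA : (1 + ρ • M).PosDef := PosDef.one.add_posSemidef (hM.smul hρ)
  exact ⟨hA.isUnit, by simpa using trace_filtering_error_le_general hA hM1 (by positivity)⟩
end
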